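/- Let p and q be probability mass functions on a finite nonempty type 𝒳, let m := (p + q)/2, and define JSD(p, q) := (1/2)·KL(p ‖ m) + (1/2)·KL(q ‖ m). For a function D : 𝒳 → (0, 1) define V(D) := Σ_x p(x) · log(D(x)) + Σ_x q(x) · log(1 − D(x)), and let D* : 𝒳 → (0, 1) satisfy D*(x) = p(x) / (p(x) + q(x)) for every x with p(x) + q(x) > 0. Then V(D*) = −log 4 + 2 · JSD(p, q). -/

import Mathlib

open Classical Finset Real

/-- `μ` is a probability mass function on the finite type `Ω`. -/
def IsPMF {Ω : Type*} [Fintype Ω] (μ : Ω → ℝ) : Prop :=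
  (∀ ω, 0 ≤ μ ω) ∧ ∑ ω, μ ω = 1

open Classical in
/-- Probability that the random variable `X` takes the value `a`, under `μ`. -/
noncomputable def pr {Ω α : Type*} [Fintype Ω] (μ : Ω → ℝ) (X : Ω → α) (a : α) : ℝ :=
  ∑ ω, if X ω = a then μ ω else 0

/-- Shannon entropy `H(X)` (natural logarithm). -/
noncomputable def ent {Ω α : Type*} [Fintype Ω] [Fintype α] (μ : Ω → ℝ) (X : Ω → α) : ℝ :=
  -∑ a, pr μ X a * Real.log (pr μ X a)

/-- Conditional entropy `H(X | Y) := H(X, Y) - H(Y)`. -/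
noncomputable def condEnt {Ω α β : Type*} [Fintype Ω] [Fintype α] [Fintype β]
    (μ : Ω → ℝ) (X : Ω → α) (Y : Ω → β) : ℝ :=
  ent μ (fun ω => (X ω, Y ω)) - ent μ Y

/-- Mutual information `I(X; Y) := H(X) + H(Y) - H(X, Y)`. -/
noncomputable def mi {Ω α β : Type*} [Fintype Ω] [Fintype α] [Fintype β]
    (μ : Ω → ℝ) (X : Ω → α) (Y : Ω → β) : ℝ :=
  ent μ X + ent μ Y - ent μ (fun ω => (X ω, Y ω))

/-- Conditional mutual information
`I(X; Y | Z) := H(X, Z) + H(Y, Z) - H(X, Y, Z) - H(Z)`. -/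
noncomputable def condMI {Ω α β γ : Type*} [Fintype Ω] [Fintype α] [Fintype β] [Fintype γ]
    (μ : Ω → ℝ) (X : Ω → α) (Y : Ω → β) (Z : Ω → γ) : ℝ :=
  ent μ (fun ω => (X ω, Z ω)) + ent μ (fun ω => (Y ω, Z ω))
    - ent μ (fun ω => ((X ω, Y ω), Z ω)) - ent μ Z

/-- Independence of the random variables `X` and `Y` under `μ`. -/
def IndepRV {Ω α β : Type*} [Fintype Ω] (μ : Ω → ℝ) (X : Ω → α) (Y : Ω → β) : Prop :=
  ∀ a b, pr μ (fun ω => (X ω, Y ω)) (a, b) = pr μ X a * pr μ Y b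

/-- Kullback–Leibler divergence between pmfs on a finite type (natural logarithm). -/
noncomputable def KL {α : Type*} [Fintype α] (p q : α → ℝ) : ℝ :=
  ∑ x, p x * Real.log (p x / q x)

/-- Jensen–Shannon divergence between pmfs on a finite type. -/
noncomputable def JSD {α : Type*} [Fintype α] (p q : α → ℝ) : ℝ :=
  (1 / 2) * KL p (fun x => (p x + q x) / 2) + (1 / 2) * KL q (fun x => (p x + q x) / 2)

/-- Normalizing by the midpoint instead of the sum shifts the logarithm by `log 2`. -/
lemma mul_log_div_add (a b : ℝ) (ha : 0 ≤ a) (hb : 0 ≤ b) :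
    a * Real.log (a / (a + b)) = a * Real.log (a / ((a + b) / 2)) - a * Real.log 2 := by
  rcases ha.eq_or_lt with rfl | ha
  · simp
  · rw [← div_mul, Real.log_mul (by positivity) two_ne_zero]
    ring

/-- If `μ` is a pmf and `D = μ / (μ + ν)` on the support of `μ`, the expected log of `D` is the
divergence of `μ` from the midpoint, minus `log 2`. -/
lemma sum_mul_log_eq_KL_midpoint {X : Type*} [Fintype X] (μ ν D : X → ℝ)
    (hμ : IsPMF μ) (hν : ∀ x, 0 ≤ ν x) (hD : ∀ x, 0 < μ x → D x = μ x / (μ x + ν x)) :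
    ∑ x, μ x * Real.log (D x) = KL μ (fun x => (μ x + ν x) / 2) - Real.log 2 := by
  have hterm : ∀ x, μ x * Real.log (D x)
      = μ x * Real.log (μ x / ((μ x + ν x) / 2)) - μ x * Real.log 2 := fun x => by
    rw [← mul_log_div_add _ _ (hμ.1 x) (hν x)]
    rcases (hμ.1 x).eq_or_lt with h | h
    · simp [← h]
    · rw [hD x h]
  simp only [hterm, Finset.sum_sub_distrib, ← Finset.sum_mul, hμ.2, one_mul, KL]

/-- At the optimal discriminator `D* = p / (p + q)`, the GAN objective equals the
Jensen–Shannon divergence between `p` and `q` up to the constant `-log 4`. -/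
theorem gan_value_eq_jsd {X : Type*} [Fintype X] [Nonempty X]
    (p q : X → ℝ) (hp : IsPMF p) (hq : IsPMF q)
    (Dstar : X → ℝ) (hDs0 : ∀ x, 0 < Dstar x) (hDs1 : ∀ x, Dstar x < 1)
    (hDstar : ∀ x, 0 < p x + q x → Dstar x = p x / (p x + q x)) :
    (∑ x, p x * Real.log (Dstar x)) + (∑ x, q x * Real.log (1 - Dstar x))
      = -Real.log 4 + 2 * JSD p q := by
  have hP := sum_mul_log_eq_KL_midpoint p q Dstar hp hq.1
    fun x hx => hDstar x (add_pos_of_pos_of_nonneg hx (hq.1 x))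
  have hQ := sum_mul_log_eq_KL_midpoint q p (fun x => 1 - Dstar x) hq hp.1 fun x hx => by
    have hpos : 0 < p x + q x := add_pos_of_nonneg_of_pos (hp.1 x) hx
    rw [hDstar x hpos, one_sub_div hpos.ne', add_sub_cancel_left, add_comm (q x)]
  have hlog : Real.log 4 = 2 * Real.log 2 := by
    rw [show (4 : ℝ) = 2 ^ 2 by norm_num, Real.log_pow]
    norm_num
  simp only [add_comm (q _) (p _)] at hQ
  rw [hP, hQ, hlog, JSD]
  ring
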